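/- Fix real parameters α, β and a probability distribution (p_1,…,p_W) with all p_i > 0 and Σ_i p_i = 1. Then the three-parametric entropy S_{α,β,q}(p) = (1/(1−q)) Σ_{i=1}^W p_i ( α p_i^{−2(1−q)} + (1/2)(1−3α+β) p_i^{−(1−q)} + (1/2)(α−1−3β) p_i^{(1−q)} + β p_i^{2(1−q)} ) satisfies lim_{q → 1} S_{α,β,q}(p) = Σ_{i=1}^W p_i ln(1/p_i), i.e., it reduces to the Boltzmann–Gibbs entropy in the limit q → 1, irrespectively of the choice of α and β. -/

import Mathlib

/-!
The coefficients of the four powers add up to `0`, so the sum over `i` vanishes at `q = 1` and the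
entropy is minus the difference quotient of that sum at `1`. The limit is therefore minus the
derivative at `q = 1`, and there the contributions of `α` and `β` cancel, leaving `∑ pᵢ ln pᵢ`.
-/

/-- The derivative at `q = 1` of the bracket multiplying `x = pᵢ` in the entropy: the coefficients,
weighted by the exponents `2, 1, -1, -2` of `x ^ (q - 1)`, add up to `1` whatever `α` and `β`. -/
theorem hasDerivAt_bracket (α β x : ℝ) (hx : 0 < x) :
    HasDerivAt (fun q : ℝ => α * x ^ (-(2 * (1 - q))) + (1 / 2) * (1 - 3 * α + β) * x ^ (-(1 - q)) +
      (1 / 2) * (α - 1 - 3 * β) * x ^ (1 - q) + β * x ^ (2 * (1 - q))) (Real.log x) 1 := by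
  have h : HasDerivAt (fun q : ℝ => 1 - q) (-1) 1 := (hasDerivAt_id (1 : ℝ)).const_sub 1
  have h2 := h.const_mul 2
  have key := (((((h2.fun_neg.const_rpow hx).const_mul α).fun_add
    ((h.fun_neg.const_rpow hx).const_mul ((1 / 2) * (1 - 3 * α + β)))).fun_add
    ((h.const_rpow hx).const_mul ((1 / 2) * (α - 1 - 3 * β)))).fun_add
    ((h2.const_rpow hx).const_mul β))
  refine key.congr_deriv ?_
  simp only [sub_self, mul_zero, neg_zero, Real.rpow_zero]
  ring

/-- The three-parametric entropy
`S_{α,β,q}(p) = (1/(1−q)) Σ_i p_i (α p_i^{−2(1−q)} + ½(1−3α+β) p_i^{−(1−q)}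
 + ½(α−1−3β) p_i^{(1−q)} + β p_i^{2(1−q)})`
tends to the Boltzmann–Gibbs entropy `Σ_i p_i ln(1/p_i)` as `q → 1`,
irrespectively of `α` and `β`. -/
theorem s_alpha_beta_q_tendsto_BG (α β : ℝ) (W : ℕ) (p : Fin W → ℝ)
    (hp : ∀ i, 0 < p i) (hsum : ∑ i, p i = 1) :
    Filter.Tendsto
      (fun q : ℝ => (1 / (1 - q)) *
        ∑ i, p i *
          (α * p i ^ (-(2 * (1 - q))) + (1 / 2) * (1 - 3 * α + β) * p i ^ (-(1 - q)) +
            (1 / 2) * (α - 1 - 3 * β) * p i ^ (1 - q) + β * p i ^ (2 * (1 - q))))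
      (nhdsWithin 1 {1}ᶜ) (nhds (∑ i, p i * Real.log (1 / p i))) := by
  have hF := HasDerivAt.fun_sum (u := Finset.univ) fun i _ =>
    (hasDerivAt_bracket α β (p i) (hp i)).const_mul (p i)
  have hlim := (hasDerivAt_iff_tendsto_slope.mp hF).neg
  convert hlim using 1
  · funext q
    -- the subtracted value of the sum at `q = 1` is zero
    rw [slope_def_field, Finset.sum_eq_zero (f := fun i => p i *
      (α * p i ^ (-(2 * (1 - (1 : ℝ)))) + (1 / 2) * (1 - 3 * α + β) * p i ^ (-(1 - (1 : ℝ))) +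
        (1 / 2) * (α - 1 - 3 * β) * p i ^ (1 - (1 : ℝ)) + β * p i ^ (2 * (1 - (1 : ℝ)))))]
    · rw [sub_zero, ← div_neg, neg_sub q 1, one_div_mul_eq_div]
    · intro i _
      simp only [sub_self, mul_zero, neg_zero, Real.rpow_zero]
      ring
  · simp [Finset.sum_neg_distrib]
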